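/- Let (A₁,·₁,{·,·}₁,α₁) and (A₂,·₂,{·,·}₂,α₂) be two multiplicative transposed Hom-Poisson algebras. On the tensor product A₁ ⊗ A₂ define (x₁⊗x₂)·(y₁⊗y₂) = (x₁·₁y₁) ⊗ (x₂·₂y₂), [x₁⊗x₂, y₁⊗y₂] = {x₁,y₁}₁ ⊗ (x₂·₂y₂) + (x₁·₁y₁) ⊗ {x₂,y₂}₂, and (α₁⊗α₂)(x₁⊗x₂) = α₁(x₁) ⊗ α₂(x₂). Then (A₁⊗A₂, ·, [·,·], α₁⊗α₂) is a transposed Hom-Poisson algebra. -/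

import Mathlib

open TensorProduct

/-!
All identities are checked on pure tensors. In a commutative Hom-associative algebra
`α x · (y · z)` is symmetric in `x`, `y`, `z`; this gives the transposed Leibniz rule on `A₁ ⊗ A₂`
one summand of the bracket at a time. In the Hom-Jacobi sum the same symmetry kills the terms
containing a double bracket, by the Hom-Jacobi identities of the factors. For the remaining terms,
the transposed Leibniz rule gives `2 α x · {y, z} = b y - b z`, where `b x = {α x, y · z}` and
`b y`, `b z` are its cyclic rotations; hence twice the cyclic sum of
`(α x · {y, z}) ⊗ b' x' + b x ⊗ (α x' · {y', z'})` telescopes to zero.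
-/

section TensorProduct

variable {R M N P : Type*} [CommSemiring R] [AddCommMonoid M] [Module R M]
  [AddCommMonoid N] [Module R N] [AddCommMonoid P] [Module R P]

theorem linearMap₂_ext_tmul {f g : M ⊗[R] N →ₗ[R] M ⊗[R] N →ₗ[R] P}
    (h : ∀ (x y : M) (x' y' : N), f (x ⊗ₜ x') (y ⊗ₜ y') = g (x ⊗ₜ x') (y ⊗ₜ y')) : f = g :=
  TensorProduct.ext' fun x x' ↦ TensorProduct.ext' fun y y' ↦ h x y x' y'

theorem tensorProduct_induction₃ {p : M ⊗[R] N → M ⊗[R] N → M ⊗[R] N → Prop}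
    (tmul : ∀ (x y z : M) (x' y' z' : N), p (x ⊗ₜ x') (y ⊗ₜ y') (z ⊗ₜ z'))
    (add_left : ∀ u v w t, p u w t → p v w t → p (u + v) w t)
    (add_middle : ∀ u v w t, p u v t → p u w t → p u (v + w) t)
    (add_right : ∀ u v w t, p u v w → p u v t → p u v (w + t))
    (u v w : M ⊗[R] N) : p u v w := by
  have zero_eq : (0 : M ⊗[R] N) = 0 ⊗ₜ 0 := (zero_tmul M (0 : N)).symm
  have tmul_tmul (x y : M) (x' y' : N) (w : M ⊗[R] N) : p (x ⊗ₜ x') (y ⊗ₜ y') w := by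
    induction w with
    | zero => exact zero_eq ▸ tmul ..
    | tmul z z' => exact tmul ..
    | add w t hw ht => exact add_right _ _ _ _ hw ht
  have tmul_left (x : M) (x' : N) (v : M ⊗[R] N) : p (x ⊗ₜ x') v w := by
    induction v with
    | zero => exact zero_eq ▸ tmul_tmul ..
    | tmul y y' => exact tmul_tmul ..
    | add v t hv ht => exact add_middle _ _ _ _ hv ht
  induction u with
  | zero => exact zero_eq ▸ tmul_left ..
  | tmul x x' => exact tmul_left ..
  | add u t hu ht => exact add_left _ _ _ _ hu ht

end TensorProduct

section CommHomAssoc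

variable {R A A₁ A₂ : Type*} [CommSemiring R] [AddCommMonoid A] [Module R A]
  [AddCommMonoid A₁] [Module R A₁] [AddCommMonoid A₂] [Module R A₂]

/-- Commutative Hom-associative algebras: the product `mul` is commutative and associative up to
the twisting map `α`, which is not required to be multiplicative. -/
structure IsCommHomAssoc (mul : A →ₗ[R] A →ₗ[R] A) (α : A →ₗ[R] A) : Prop where
  mul_comm (x y : A) : mul x y = mul y x
  mul_assoc (x y z : A) : mul (mul x y) (α z) = mul (α x) (mul y z)

namespace IsCommHomAssoc

variable {mul : A →ₗ[R] A →ₗ[R] A} {α : A →ₗ[R] A}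
  {mul₁ : A₁ →ₗ[R] A₁ →ₗ[R] A₁} {α₁ : A₁ →ₗ[R] A₁}
  {mul₂ : A₂ →ₗ[R] A₂ →ₗ[R] A₂} {α₂ : A₂ →ₗ[R] A₂}

theorem mul_left_comm (h : IsCommHomAssoc mul α) (x y z : A) :
    mul (α x) (mul y z) = mul (α y) (mul x z) := by
  rw [← h.mul_assoc, h.mul_comm x y, h.mul_assoc]

theorem mul_rotate (h : IsCommHomAssoc mul α) (x y z : A) :
    mul (α y) (mul z x) = mul (α x) (mul y z) := by
  rw [h.mul_comm z x, h.mul_left_comm]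

theorem tensorProduct (h₁ : IsCommHomAssoc mul₁ α₁) (h₂ : IsCommHomAssoc mul₂ α₂) :
    IsCommHomAssoc (map₂ mul₁ mul₂) (map α₁ α₂) where
  mul_comm := by
    have flip_eq : map₂ mul₁ mul₂ = (map₂ mul₁ mul₂).flip := linearMap₂_ext_tmul fun x y x' y' ↦ by
      simp only [LinearMap.flip_apply, map₂_apply_tmul, map_tmul, h₁.mul_comm x, h₂.mul_comm x']
    exact fun u v ↦ LinearMap.congr_fun₂ flip_eq u v
  mul_assoc := by
    refine tensorProduct_induction₃ (fun x y z x' y' z' ↦ ?_) ?_ ?_ ?_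
    · simp only [map₂_apply_tmul, map_tmul, h₁.mul_assoc, h₂.mul_assoc]
    all_goals
      intro _ _ _ _ ha hb
      simp only [map_add, LinearMap.add_apply, ha, hb]

end IsCommHomAssoc

end CommHomAssoc

section TransposedHomPoisson

variable {R A A₁ A₂ : Type*} [CommRing R] [AddCommGroup A] [Module R A]
  [AddCommGroup A₁] [Module R A₁] [AddCommGroup A₂] [Module R A₂]

/-- Hom-Lie algebras: the bracket `br` is skew-symmetric and satisfies the Jacobi identity up to
the twisting map `α`, which is not required to be multiplicative. -/
structure IsHomLie (br : A →ₗ[R] A →ₗ[R] A) (α : A →ₗ[R] A) : Prop where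
  skew (x y : A) : br x y = -br y x
  jacobi (x y z : A) : br (α x) (br y z) + br (α y) (br z x) + br (α z) (br x y) = 0

/-- Transposed Hom-Poisson algebras: a commutative Hom-associative product and a Hom-Lie bracket
with the same twisting map, related by the transposed Leibniz rule. -/
structure IsTransposedHomPoisson (mul br : A →ₗ[R] A →ₗ[R] A) (α : A →ₗ[R] A) : Prop extends
    IsCommHomAssoc mul α, IsHomLie br α where
  leibniz (x y z : A) : (2 : R) • mul (α z) (br x y) = br (mul z x) (α y) + br (α x) (mul z y)

/-- The bracket `[x ⊗ x', y ⊗ y'] = {x, y} ⊗ (x' · y') + (x · y) ⊗ {x', y'}` on the tensor product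
of two algebras, each with a product and a bracket. -/
def tensorBracket (mul₁ br₁ : A₁ →ₗ[R] A₁ →ₗ[R] A₁) (mul₂ br₂ : A₂ →ₗ[R] A₂ →ₗ[R] A₂) :
    A₁ ⊗[R] A₂ →ₗ[R] A₁ ⊗[R] A₂ →ₗ[R] A₁ ⊗[R] A₂ :=
  map₂ br₁ mul₂ + map₂ mul₁ br₂

theorem tensorBracket_tmul (mul₁ br₁ : A₁ →ₗ[R] A₁ →ₗ[R] A₁) (mul₂ br₂ : A₂ →ₗ[R] A₂ →ₗ[R] A₂)
    (x y : A₁) (x' y' : A₂) :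
    tensorBracket mul₁ br₁ mul₂ br₂ (x ⊗ₜ x') (y ⊗ₜ y') =
      br₁ x y ⊗ₜ mul₂ x' y' + mul₁ x y ⊗ₜ br₂ x' y' :=
  rfl

theorem tensorBracket_skew {mul₁ br₁ : A₁ →ₗ[R] A₁ →ₗ[R] A₁} {mul₂ br₂ : A₂ →ₗ[R] A₂ →ₗ[R] A₂}
    (hcomm₁ : ∀ x y, mul₁ x y = mul₁ y x) (hskew₁ : ∀ x y, br₁ x y = -br₁ y x)
    (hcomm₂ : ∀ x y, mul₂ x y = mul₂ y x) (hskew₂ : ∀ x y, br₂ x y = -br₂ y x)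
    (u v : A₁ ⊗[R] A₂) :
    tensorBracket mul₁ br₁ mul₂ br₂ u v = -tensorBracket mul₁ br₁ mul₂ br₂ v u := by
  have eq_neg_flip :
      tensorBracket mul₁ br₁ mul₂ br₂ = -(tensorBracket mul₁ br₁ mul₂ br₂).flip :=
    linearMap₂_ext_tmul fun x y x' y' ↦ by
      simp only [LinearMap.neg_apply, LinearMap.flip_apply, tensorBracket_tmul, hskew₁ x,
        hskew₂ x', hcomm₁ x, hcomm₂ x', neg_tmul, tmul_neg, neg_add]
  exact LinearMap.congr_fun₂ eq_neg_flip u v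

theorem cyclic_sum_tmul_eq_zero [Invertible (2 : R)] {p₁ p₂ p₃ b₁ b₂ b₃ : A₁}
    {p₁' p₂' p₃' b₁' b₂' b₃' : A₂}
    (h₁ : (2 : R) • p₁ = b₂ - b₃) (h₂ : (2 : R) • p₂ = b₃ - b₁) (h₃ : (2 : R) • p₃ = b₁ - b₂)
    (h₁' : (2 : R) • p₁' = b₂' - b₃') (h₂' : (2 : R) • p₂' = b₃' - b₁')
    (h₃' : (2 : R) • p₃' = b₁' - b₂') :
    (p₁ ⊗ₜ[R] b₁' + b₁ ⊗ₜ p₁') + (p₂ ⊗ₜ b₂' + b₂ ⊗ₜ p₂') + (p₃ ⊗ₜ b₃' + b₃ ⊗ₜ p₃') = 0 := by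
  rw [← (isUnit_of_invertible (2 : R)).smul_eq_zero]
  simp only [smul_add, ← tmul_smul _ b₁, ← tmul_smul _ b₂, ← tmul_smul _ b₃, smul_tmul',
    h₁, h₂, h₃, h₁', h₂', h₃', sub_tmul, tmul_sub]
  abel

namespace IsTransposedHomPoisson

variable {mul br : A →ₗ[R] A →ₗ[R] A} {α : A →ₗ[R] A}
  {mul₁ br₁ : A₁ →ₗ[R] A₁ →ₗ[R] A₁} {α₁ : A₁ →ₗ[R] A₁}
  {mul₂ br₂ : A₂ →ₗ[R] A₂ →ₗ[R] A₂} {α₂ : A₂ →ₗ[R] A₂}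

theorem two_smul_mul_br (h : IsTransposedHomPoisson mul br α) (x y z : A) :
    (2 : R) • mul (α x) (br y z) = br (α y) (mul z x) - br (α z) (mul x y) := by
  rw [h.leibniz, h.skew (mul x y), h.mul_comm x z, neg_add_eq_sub]

theorem tensorBracket_jacobi_tmul [Invertible (2 : R)] (h₁ : IsTransposedHomPoisson mul₁ br₁ α₁)
    (h₂ : IsTransposedHomPoisson mul₂ br₂ α₂) (x y z : A₁) (x' y' z' : A₂) :
    let br := tensorBracket mul₁ br₁ mul₂ br₂
    br (α₁ x ⊗ₜ α₂ x') (br (y ⊗ₜ y') (z ⊗ₜ z')) + br (α₁ y ⊗ₜ α₂ y') (br (z ⊗ₜ z') (x ⊗ₜ x')) +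
      br (α₁ z ⊗ₜ α₂ z') (br (x ⊗ₜ x') (y ⊗ₜ y')) = 0 := by
  have left_double_brackets :
      br₁ (α₁ x) (br₁ y z) ⊗ₜ[R] mul₂ (α₂ x') (mul₂ y' z') +
        br₁ (α₁ y) (br₁ z x) ⊗ₜ mul₂ (α₂ y') (mul₂ z' x') +
        br₁ (α₁ z) (br₁ x y) ⊗ₜ mul₂ (α₂ z') (mul₂ x' y') = 0 := by
    rw [h₂.mul_rotate x', ← h₂.mul_rotate z', ← add_tmul, ← add_tmul, h₁.jacobi, zero_tmul]
  have right_double_brackets :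
      mul₁ (α₁ x) (mul₁ y z) ⊗ₜ[R] br₂ (α₂ x') (br₂ y' z') +
        mul₁ (α₁ y) (mul₁ z x) ⊗ₜ br₂ (α₂ y') (br₂ z' x') +
        mul₁ (α₁ z) (mul₁ x y) ⊗ₜ br₂ (α₂ z') (br₂ x' y') = 0 := by
    rw [h₁.mul_rotate x, ← h₁.mul_rotate z, ← tmul_add, ← tmul_add, h₂.jacobi, tmul_zero]
  have mixed_terms := cyclic_sum_tmul_eq_zero
    (h₁.two_smul_mul_br x y z) (h₁.two_smul_mul_br y z x) (h₁.two_smul_mul_br z x y)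
    (h₂.two_smul_mul_br x' y' z') (h₂.two_smul_mul_br y' z' x') (h₂.two_smul_mul_br z' x' y')
  simp only [tensorBracket_tmul, map_add]
  linear_combination (norm := abel)
    left_double_brackets + right_double_brackets + mixed_terms

theorem tensorBracket_jacobi [Invertible (2 : R)] (h₁ : IsTransposedHomPoisson mul₁ br₁ α₁)
    (h₂ : IsTransposedHomPoisson mul₂ br₂ α₂) (u v w : A₁ ⊗[R] A₂) :
    let br := tensorBracket mul₁ br₁ mul₂ br₂
    br (map α₁ α₂ u) (br v w) + br (map α₁ α₂ v) (br w u) + br (map α₁ α₂ w) (br u v) = 0 := by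
  revert u v w
  refine tensorProduct_induction₃ (h₁.tensorBracket_jacobi_tmul h₂) ?_ ?_ ?_
  all_goals
    intro _ _ _ _ ha hb
    simp only [map_add, LinearMap.add_apply]
    linear_combination (norm := abel) ha + hb

theorem tensorBracket_leibniz_tmul (h₁ : IsTransposedHomPoisson mul₁ br₁ α₁)
    (h₂ : IsTransposedHomPoisson mul₂ br₂ α₂) (x y z : A₁) (x' y' z' : A₂) :
    let mul := map₂ mul₁ mul₂
    let br := tensorBracket mul₁ br₁ mul₂ br₂
    (2 : R) • mul (α₁ z ⊗ₜ α₂ z') (br (x ⊗ₜ x') (y ⊗ₜ y')) =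
      br (mul (z ⊗ₜ z') (x ⊗ₜ x')) (α₁ y ⊗ₜ α₂ y') +
        br (α₁ x ⊗ₜ α₂ x') (mul (z ⊗ₜ z') (y ⊗ₜ y')) := by
  simp only [tensorBracket_tmul, map₂_apply_tmul, map_tmul, map_add, smul_add]
  rw [smul_tmul', ← tmul_smul, h₁.leibniz, h₂.leibniz, h₁.mul_assoc, h₂.mul_assoc,
    h₁.mul_left_comm x, h₂.mul_left_comm x', add_tmul, tmul_add]
  abel

theorem tensorBracket_leibniz (h₁ : IsTransposedHomPoisson mul₁ br₁ α₁)
    (h₂ : IsTransposedHomPoisson mul₂ br₂ α₂) (u v w : A₁ ⊗[R] A₂) :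
    let mul := map₂ mul₁ mul₂
    let br := tensorBracket mul₁ br₁ mul₂ br₂
    (2 : R) • mul (map α₁ α₂ w) (br u v) =
      br (mul w u) (map α₁ α₂ v) + br (map α₁ α₂ u) (mul w v) := by
  revert u v w
  refine tensorProduct_induction₃ (h₁.tensorBracket_leibniz_tmul h₂) ?_ ?_ ?_
  all_goals
    intro _ _ _ _ ha hb
    simp only [map_add, LinearMap.add_apply, smul_add]
    linear_combination (norm := abel) ha + hb

end IsTransposedHomPoisson

theorem tensorProduct_transposedHomPoisson_general [Invertible (2 : R)]
    {mul₁ br₁ : A₁ →ₗ[R] A₁ →ₗ[R] A₁} {α₁ : A₁ →ₗ[R] A₁}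
    {mul₂ br₂ : A₂ →ₗ[R] A₂ →ₗ[R] A₂} {α₂ : A₂ →ₗ[R] A₂}
    (h₁ : IsTransposedHomPoisson mul₁ br₁ α₁) (h₂ : IsTransposedHomPoisson mul₂ br₂ α₂) :
    IsTransposedHomPoisson (map₂ mul₁ mul₂) (tensorBracket mul₁ br₁ mul₂ br₂) (map α₁ α₂) where
  toIsCommHomAssoc := h₁.toIsCommHomAssoc.tensorProduct h₂.toIsCommHomAssoc
  skew := tensorBracket_skew h₁.mul_comm h₁.skew h₂.mul_comm h₂.skew
  jacobi := h₁.tensorBracket_jacobi h₂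
  leibniz := h₁.tensorBracket_leibniz h₂

end TransposedHomPoisson

/-- The tensor product of two multiplicative transposed Hom-Poisson
algebras is a transposed Hom-Poisson algebra. -/
theorem tensorProduct_transposedHomPoisson
    {K A₁ A₂ : Type*} [Field K] [CharZero K]
    [AddCommGroup A₁] [Module K A₁] [AddCommGroup A₂] [Module K A₂]
    -- transposed Hom-Poisson algebra (A₁, mul₁, br₁, α₁), multiplicative
    (mul₁ : A₁ →ₗ[K] A₁ →ₗ[K] A₁) (br₁ : A₁ →ₗ[K] A₁ →ₗ[K] A₁) (α₁ : A₁ →ₗ[K] A₁)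
    (hcomm₁ : ∀ x y : A₁, mul₁ x y = mul₁ y x)
    (hassoc₁ : ∀ x y z : A₁, mul₁ (mul₁ x y) (α₁ z) = mul₁ (α₁ x) (mul₁ y z))
    (hskew₁ : ∀ x y : A₁, br₁ x y = - br₁ y x)
    (hjac₁ : ∀ x y z : A₁,
      br₁ (α₁ x) (br₁ y z) + br₁ (α₁ y) (br₁ z x) + br₁ (α₁ z) (br₁ x y) = 0)
    (hleib₁ : ∀ x y z : A₁,
      (2 : K) • mul₁ (α₁ z) (br₁ x y) = br₁ (mul₁ z x) (α₁ y) + br₁ (α₁ x) (mul₁ z y))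
    (hmultm₁ : ∀ x y : A₁, α₁ (mul₁ x y) = mul₁ (α₁ x) (α₁ y))
    (hmultb₁ : ∀ x y : A₁, α₁ (br₁ x y) = br₁ (α₁ x) (α₁ y))
    -- transposed Hom-Poisson algebra (A₂, mul₂, br₂, α₂), multiplicative
    (mul₂ : A₂ →ₗ[K] A₂ →ₗ[K] A₂) (br₂ : A₂ →ₗ[K] A₂ →ₗ[K] A₂) (α₂ : A₂ →ₗ[K] A₂)
    (hcomm₂ : ∀ x y : A₂, mul₂ x y = mul₂ y x)
    (hassoc₂ : ∀ x y z : A₂, mul₂ (mul₂ x y) (α₂ z) = mul₂ (α₂ x) (mul₂ y z))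
    (hskew₂ : ∀ x y : A₂, br₂ x y = - br₂ y x)
    (hjac₂ : ∀ x y z : A₂,
      br₂ (α₂ x) (br₂ y z) + br₂ (α₂ y) (br₂ z x) + br₂ (α₂ z) (br₂ x y) = 0)
    (hleib₂ : ∀ x y z : A₂,
      (2 : K) • mul₂ (α₂ z) (br₂ x y) = br₂ (mul₂ z x) (α₂ y) + br₂ (α₂ x) (mul₂ z y))
    (hmultm₂ : ∀ x y : A₂, α₂ (mul₂ x y) = mul₂ (α₂ x) (α₂ y))
    (hmultb₂ : ∀ x y : A₂, α₂ (br₂ x y) = br₂ (α₂ x) (α₂ y))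
    -- the bilinear structure maps on the tensor product
    (mul : (A₁ ⊗[K] A₂) →ₗ[K] (A₁ ⊗[K] A₂) →ₗ[K] (A₁ ⊗[K] A₂))
    (br : (A₁ ⊗[K] A₂) →ₗ[K] (A₁ ⊗[K] A₂) →ₗ[K] (A₁ ⊗[K] A₂))
    (hmul : ∀ (x₁ y₁ : A₁) (x₂ y₂ : A₂),
      mul (x₁ ⊗ₜ[K] x₂) (y₁ ⊗ₜ[K] y₂) = (mul₁ x₁ y₁) ⊗ₜ[K] (mul₂ x₂ y₂))
    (hbr : ∀ (x₁ y₁ : A₁) (x₂ y₂ : A₂),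
      br (x₁ ⊗ₜ[K] x₂) (y₁ ⊗ₜ[K] y₂) =
        (br₁ x₁ y₁) ⊗ₜ[K] (mul₂ x₂ y₂) + (mul₁ x₁ y₁) ⊗ₜ[K] (br₂ x₂ y₂)) :
    (∀ u w : A₁ ⊗[K] A₂, mul u w = mul w u) ∧
    (∀ u w t : A₁ ⊗[K] A₂,
      mul (mul u w) (TensorProduct.map α₁ α₂ t) =
        mul (TensorProduct.map α₁ α₂ u) (mul w t)) ∧
    (∀ u w : A₁ ⊗[K] A₂, br u w = - br w u) ∧
    (∀ u w t : A₁ ⊗[K] A₂,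
      br (TensorProduct.map α₁ α₂ u) (br w t) +
        br (TensorProduct.map α₁ α₂ w) (br t u) +
        br (TensorProduct.map α₁ α₂ t) (br u w) = 0) ∧
    (∀ u w t : A₁ ⊗[K] A₂,
      (2 : K) • mul (TensorProduct.map α₁ α₂ t) (br u w) =
        br (mul t u) (TensorProduct.map α₁ α₂ w) +
          br (TensorProduct.map α₁ α₂ u) (mul t w)) := by
  obtain rfl : mul = map₂ mul₁ mul₂ := linearMap₂_ext_tmul hmul
  obtain rfl : br = tensorBracket mul₁ br₁ mul₂ br₂ := linearMap₂_ext_tmul hbr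
  have h := tensorProduct_transposedHomPoisson_general
    ⟨⟨hcomm₁, hassoc₁⟩, ⟨hskew₁, hjac₁⟩, hleib₁⟩ ⟨⟨hcomm₂, hassoc₂⟩, ⟨hskew₂, hjac₂⟩, hleib₂⟩
  exact ⟨h.mul_comm, h.mul_assoc, h.skew, h.jacobi, h.leibniz⟩
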